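/- Median schemes respect project interactions: define the interaction-aware overlap utility û(a,b) = Σ_q min(f(a)_q, f(b)_q). Let a, b, c ∈ 𝔹 and suppose that at least one of a and b respects the project interactions. Then every budget z ∈ 𝔹 that maximizes û(z,a) + û(z,b) + û(z,c) over all budgets in 𝔹 respects the project interactions. -/

import Mathlib

/-- A budget on `m` projects: nonnegative allocations summing to 1. -/
def IsBudget {m : ℕ} (b : Fin m → ℝ) : Prop :=
  (∀ j, 0 ≤ b j) ∧ ∑ j, b j = 1

/-- Kinds of project groups: perfect complements, perfect substitutes, regular. -/
inductive GroupKind where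
  | compl : GroupKind
  | subst : GroupKind
  | reg : GroupKind

/-- A partition of the `m` projects into groups of perfect complements (size ≥ 2),
perfect substitutes (size ≥ 2), and regular singleton groups. -/
structure ProjectGroups (m : ℕ) where
  numGroups : ℕ
  grp : Fin m → Fin numGroups
  kind : Fin numGroups → GroupKind
  nonempty : ∀ q, ∃ j, grp j = q
  compl_big : ∀ q, kind q = GroupKind.compl →
    2 ≤ (Finset.univ.filter (fun j => grp j = q)).card
  subst_big : ∀ q, kind q = GroupKind.subst →
    2 ≤ (Finset.univ.filter (fun j => grp j = q)).card
  reg_singleton : ∀ q, kind q = GroupKind.reg →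
    (Finset.univ.filter (fun j => grp j = q)).card = 1

namespace ProjectGroups

variable {m : ℕ} (gs : ProjectGroups m)

/-- The fiber (set of projects) of group `q`. -/
def fiber (q : Fin gs.numGroups) : Finset (Fin m) :=
  Finset.univ.filter (fun j => gs.grp j = q)

theorem fiber_nonempty (q : Fin gs.numGroups) : (gs.fiber q).Nonempty := by
  obtain ⟨j, hj⟩ := gs.nonempty q
  exact ⟨j, by simp [fiber, hj]⟩

/-- The efficiency function `f(b)_q`: for a perfect-complement group, `s(q)` times the
minimum allocation in the group; for a perfect-substitute group, the maximum
allocation in the group; for a regular singleton group, the allocation of its unique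
project (expressed as the maximum over the singleton). -/
noncomputable def eff (b : Fin m → ℝ) (q : Fin gs.numGroups) : ℝ :=
  match gs.kind q with
  | GroupKind.compl => ((gs.fiber q).card : ℝ) * (gs.fiber q).inf' (gs.fiber_nonempty q) b
  | GroupKind.subst => (gs.fiber q).sup' (gs.fiber_nonempty q) b
  | GroupKind.reg => (gs.fiber q).sup' (gs.fiber_nonempty q) b

/-- `b` respects the project interactions: all projects in each perfect-complement
group receive equal allocation, and at most one project in each perfect-substitute
group receives positive allocation. -/
def Respects (b : Fin m → ℝ) : Prop :=
  (∀ q, gs.kind q = GroupKind.compl →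
    ∀ j ∈ gs.fiber q, ∀ j' ∈ gs.fiber q, b j = b j') ∧
  (∀ q, gs.kind q = GroupKind.subst →
    ∀ j ∈ gs.fiber q, ∀ j' ∈ gs.fiber q, j ≠ j' → ¬(0 < b j ∧ 0 < b j'))

end ProjectGroups

/-- The interaction-aware overlap utility `û(a,b) = Σ_q min(f(a)_q, f(b)_q)`. -/
noncomputable def iutil {m : ℕ} (gs : ProjectGroups m) (a b : Fin m → ℝ) : ℝ :=
  ∑ q, min (gs.eff a q) (gs.eff b q)

namespace ProjectGroups

variable {m : ℕ} (gs : ProjectGroups m)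

theorem eff_le_sum (z : Fin m → ℝ) (hz : ∀ j, 0 ≤ z j) (q : Fin gs.numGroups) :
    gs.eff z q ≤ ∑ j ∈ gs.fiber q, z j := by
  have hs : (gs.fiber q).sup' (gs.fiber_nonempty q) z ≤ ∑ j ∈ gs.fiber q, z j :=
    Finset.sup'_le _ _ fun j hj => Finset.single_le_sum (fun i _ => hz i) hj
  unfold eff
  cases hk : gs.kind q with
  | compl =>
    have := Finset.card_nsmul_le_sum (gs.fiber q) z
      ((gs.fiber q).inf' (gs.fiber_nonempty q) z) (fun j hj => Finset.inf'_le _ hj)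
    simpa using this
  | subst => exact hs
  | reg => exact hs

theorem sum_le_eff (z : Fin m → ℝ) (hz : ∀ j, 0 ≤ z j) (hr : gs.Respects z)
    (q : Fin gs.numGroups) : ∑ j ∈ gs.fiber q, z j ≤ gs.eff z q := by
  unfold eff
  cases hk : gs.kind q with
  | compl =>
    have := Finset.sum_le_card_nsmul (gs.fiber q) z
      ((gs.fiber q).inf' (gs.fiber_nonempty q) z)
      (fun j hj => Finset.le_inf' _ _ fun i hi => (hr.1 q hk j hj i hi).le)
    simpa using this
  | subst =>
    obtain ⟨k, hk1, hk2⟩ := Finset.exists_mem_eq_sup' (gs.fiber_nonempty q) z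
    rw [Finset.sum_eq_single_of_mem k hk1]
    · exact hk2.ge
    · intro j hj hjk
      by_contra h0
      have hj0 : 0 < z j := lt_of_le_of_ne (hz j) (Ne.symm h0)
      have hle : z j ≤ z k := hk2 ▸ Finset.le_sup' z hj
      exact hr.2 q hk j hj k hk1 hjk ⟨hj0, hj0.trans_le hle⟩
  | reg =>
    obtain ⟨k, hk1⟩ := Finset.card_eq_one.1 (gs.reg_singleton q hk)
    have hk2 : gs.fiber q = {k} := hk1
    have : z k ≤ (gs.fiber q).sup' (gs.fiber_nonempty q) z :=
      Finset.le_sup' z (by simp [hk2])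
    calc ∑ j ∈ gs.fiber q, z j = z k := by simp [hk2]
      _ ≤ _ := this

theorem respects_of_sum_le (z : Fin m → ℝ) (hz : ∀ j, 0 ≤ z j)
    (h : ∀ q, ∑ j ∈ gs.fiber q, z j ≤ gs.eff z q) : gs.Respects z := by
  constructor
  · intro q hk
    have key : ∀ j ∈ gs.fiber q, z j = (gs.fiber q).inf' (gs.fiber_nonempty q) z := by
      intro j hj
      by_contra hne
      have hlt : (gs.fiber q).inf' (gs.fiber_nonempty q) z < z j :=
        lt_of_le_of_ne (Finset.inf'_le _ hj) (Ne.symm hne)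
      have h1 := Finset.sum_lt_sum (s := gs.fiber q)
        (f := fun _ => (gs.fiber q).inf' (gs.fiber_nonempty q) z) (g := z)
        (fun i hi => Finset.inf'_le _ hi) ⟨j, hj, hlt⟩
      have h2 := h q
      unfold eff at h2
      rw [hk] at h2
      simp only [Finset.sum_const, nsmul_eq_mul] at h1
      exact absurd h1 (not_lt.2 h2)
    intro j hj j' hj'
    rw [key j hj, key j' hj']
  · intro q hk j hj j' hj' hne hpos
    have h2 := h q
    unfold eff at h2
    rw [hk] at h2
    obtain ⟨k, hk1, hk2⟩ := Finset.exists_mem_eq_sup' (gs.fiber_nonempty q) z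
    have key : ∀ i ∈ gs.fiber q, i ≠ k → z i ≤ 0 := by
      intro i hi hik
      have h3 := Finset.sum_le_sum_of_subset_of_nonneg (f := z)
        (s := {i, k}) (t := gs.fiber q) (by
          intro x hx
          simp only [Finset.mem_insert, Finset.mem_singleton] at hx
          rcases hx with rfl | rfl <;> assumption) (fun x _ _ => hz x)
      rw [Finset.sum_pair hik] at h3
      simp only at h2
      linarith
    by_cases hjk : j = k
    · exact absurd (key j' hj' (fun h => hne (hjk.trans h.symm))) (not_le.2 hpos.2)
    · exact absurd (key j hj hjk) (not_le.2 hpos.1)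

theorem sum_fibers (z : Fin m → ℝ) : ∑ q, ∑ j ∈ gs.fiber q, z j = ∑ j, z j :=
  Finset.sum_fiberwise _ _ _

theorem exists_realize (e : Fin gs.numGroups → ℝ) (he : ∀ q, 0 ≤ e q)
    (hs : ∑ q, e q = 1) : ∃ z : Fin m → ℝ, IsBudget z ∧ ∀ q, e q ≤ gs.eff z q := by
  classical
  choose rep hrep using gs.nonempty
  have hw : ∀ q, ∃ w : Fin m → ℝ, (∀ j, 0 ≤ w j) ∧ ∑ j ∈ gs.fiber q, w j = e q ∧
      e q ≤ gs.eff w q := by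
    intro q
    have hmem : rep q ∈ gs.fiber q := by simp [fiber, hrep]
    have hc : (0 : ℝ) < (gs.fiber q).card := by
      exact_mod_cast (gs.fiber_nonempty q).card_pos
    have hsum : ∑ j ∈ gs.fiber q, (Pi.single (rep q) (e q) : Fin m → ℝ) j = e q := by
      rw [Finset.sum_eq_single_of_mem (rep q) hmem (fun j _ hj => by simp [hj])]
      simp
    have hnn : ∀ j, 0 ≤ (Pi.single (rep q) (e q) : Fin m → ℝ) j := by
      intro j
      by_cases h : j = rep q
      · subst h; simpa using he q
      · simp [h]
    have hsup : e q ≤ (gs.fiber q).sup' (gs.fiber_nonempty q)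
        (Pi.single (rep q) (e q) : Fin m → ℝ) := by
      have := Finset.le_sup' (Pi.single (rep q) (e q) : Fin m → ℝ) hmem
      rwa [Pi.single_eq_same] at this
    cases hk : gs.kind q with
    | compl =>
      refine ⟨fun _ => e q / (gs.fiber q).card, fun _ => div_nonneg (he q) hc.le, ?_, ?_⟩
      · simp only [Finset.sum_const, nsmul_eq_mul]
        field_simp
      · unfold eff
        rw [hk]
        simp only [Finset.inf'_const]
        apply le_of_eq
        field_simp
    | subst =>
      refine ⟨_, hnn, hsum, ?_⟩
      unfold eff
      rw [hk]
      exact hsup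
    | reg =>
      refine ⟨_, hnn, hsum, ?_⟩
      unfold eff
      rw [hk]
      exact hsup
  choose w hw0 hw1 hw2 using hw
  have hag : ∀ q, ∀ j ∈ gs.fiber q, w (gs.grp j) j = w q j := by
    intro q j hj
    simp only [fiber, Finset.mem_filter, Finset.mem_univ, true_and] at hj
    rw [hj]
  refine ⟨fun j => w (gs.grp j) j, ⟨fun j => hw0 _ j, ?_⟩, ?_⟩
  · rw [← gs.sum_fibers, ← hs]
    refine Finset.sum_congr rfl fun q _ => ?_
    rw [← hw1 q]
    exact Finset.sum_congr rfl (hag q)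
  · intro q
    refine (hw2 q).trans (le_of_eq ?_)
    unfold eff
    rw [Finset.inf'_congr (gs.fiber_nonempty q) rfl (hag q),
      Finset.sup'_congr (gs.fiber_nonempty q) rfl (hag q)]

theorem eff_nonneg (z : Fin m → ℝ) (hz : ∀ j, 0 ≤ z j) (q : Fin gs.numGroups) :
    0 ≤ gs.eff z q := by
  have hs : 0 ≤ (gs.fiber q).sup' (gs.fiber_nonempty q) z := by
    obtain ⟨k, hk⟩ := gs.fiber_nonempty q
    exact (hz k).trans (Finset.le_sup' z hk)
  unfold eff
  cases hk : gs.kind q with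
  | compl => exact mul_nonneg (Nat.cast_nonneg _) (Finset.le_inf' _ _ fun j _ => hz j)
  | subst => exact hs
  | reg => exact hs

theorem improve (a z : Fin m → ℝ) (ha : IsBudget a) (hz : IsBudget z)
    (hr : gs.Respects a) (hn : ¬ gs.Respects z) :
    ∃ z', IsBudget z' ∧ (∀ b, iutil gs z b ≤ iutil gs z' b) ∧
      iutil gs z a < iutil gs z' a := by
  classical
  have hlt : ∑ q, gs.eff z q < 1 := by
    by_contra hge
    apply hn
    apply gs.respects_of_sum_le z hz.1
    intro q
    by_contra hq
    have := Finset.sum_lt_sum (s := Finset.univ) (f := gs.eff z)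
      (g := fun q => ∑ j ∈ gs.fiber q, z j) (fun q _ => gs.eff_le_sum z hz.1 q)
      ⟨q, Finset.mem_univ _, not_le.1 hq⟩
    rw [gs.sum_fibers, hz.2] at this
    exact hge this
  have hage : 1 ≤ ∑ q, gs.eff a q := by
    rw [← ha.2, ← gs.sum_fibers]
    exact Finset.sum_le_sum fun q _ => gs.sum_le_eff a ha.1 hr q
  obtain ⟨p, -, hp⟩ := Finset.exists_lt_of_sum_lt (hlt.trans_le hage)
  set d : ℝ := 1 - ∑ q, gs.eff z q with hd
  have hd0 : 0 < d := by linarith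
  obtain ⟨z', hb', hz'⟩ := gs.exists_realize
    (fun q => gs.eff z q + (Pi.single p d : Fin gs.numGroups → ℝ) q)
    (fun q => add_nonneg (gs.eff_nonneg z hz.1 q) (by
      by_cases h : q = p
      · subst h; simpa using hd0.le
      · simp [h]))
    (by rw [Finset.sum_add_distrib, Finset.sum_eq_single_of_mem (f := (Pi.single p d : Fin gs.numGroups → ℝ)) p (Finset.mem_univ _) (fun j _ hj => by simp [hj]),
      Pi.single_eq_same]; linarith)
  have hle : ∀ q, gs.eff z q ≤ gs.eff z' q := by
    intro q
    refine le_trans ?_ (hz' q)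
    by_cases h : q = p
    · subst h; simpa using hd0.le
    · simp [h]
  refine ⟨z', hb', fun b => Finset.sum_le_sum fun q _ => min_le_min_right _ (hle q), ?_⟩
  refine Finset.sum_lt_sum (fun q _ => min_le_min_right _ (hle q)) ⟨p, Finset.mem_univ _, ?_⟩
  have h1 := hz' p
  simp only [Pi.single_eq_same] at h1
  rw [min_eq_left hp.le]
  exact lt_min (by linarith) hp

end ProjectGroups

/-- Median schemes respect project interactions: if at least one of the budgets
`a, b` respects the project interactions, then every budget `z` maximizing
`û(z,a) + û(z,b) + û(z,c)` over all budgets respects the project interactions. -/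
theorem median_outcome_respects_interactions {m : ℕ} (gs : ProjectGroups m)
    (a b c : Fin m → ℝ) (ha : IsBudget a) (hb : IsBudget b) (hc : IsBudget c)
    (hab : gs.Respects a ∨ gs.Respects b)
    (z : Fin m → ℝ) (hz : IsBudget z)
    (hmax : ∀ z' : Fin m → ℝ, IsBudget z' →
      iutil gs z' a + iutil gs z' b + iutil gs z' c ≤
        iutil gs z a + iutil gs z b + iutil gs z c) :
    gs.Respects z := by
  by_contra hn
  rcases hab with hr | hr
  · obtain ⟨z', h1, h2, h3⟩ := gs.improve a z ha hz hr hn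
    linarith [hmax z' h1, h2 b, h2 c]
  · obtain ⟨z', h1, h2, h3⟩ := gs.improve b z hb hz hr hn
    linarith [hmax z' h1, h2 a, h2 c]
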